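/- Fix t > 0, x₀ ∈ ℝ, μ ∈ ℝ, σ > 0 with x₀ ≠ μ. For each θ > 0 let γ_θ be the Gaussian probability measure on ℝ with mean m_t = x₀·e^{−θt} + μ·(1 − e^{−θt}) and variance σ_t² = (σ²/(2θ))·(1 − e^{−2θt}). Define T**_n : ℝⁿ → ℝ by T**_n(z_1,…,z_n) = −(1/t)·ln( ((Σ_{k=1}^n z_k)/n − μ) / (x₀ − μ) ). Then for every θ > 0, γ_θ^ℕ({(z_k)_{k∈ℕ} ∈ ℝ^ℕ : lim_{n→∞} T**_n(z_1,…,z_n) = θ}) = 1; that is, (T**_n) is a consistent estimator of θ in the sense of convergence almost everywhere for the family (γ_θ^ℕ)_{θ>0}. -/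

import Mathlib

/-!
Under `γ_θ^ℕ` the coordinates are i.i.d. with law `γ_θ`, which is integrable, so by the strong law
of large numbers the sample means converge almost surely to the mean
`x₀ e^{-θt} + μ (1 - e^{-θt}) = μ + (x₀ - μ) e^{-θt}`. Hence the argument of the logarithm converges
to `e^{-θt} > 0`. The logarithm is continuous there, and `-(1/t) log e^{-θt} = θ`.
-/

open MeasureTheory ProbabilityTheory Filter Real

/-- `P` is the countable product measure `ν^ℕ` on `ℕ → ℝ` of the Borel probability
measure `ν` on `ℝ`: it is a probability measure whose finite-dimensional cylinder
marginals are products of `ν`. -/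
def IsCountableProductOf (P : Measure (ℕ → ℝ)) (ν : Measure ℝ) : Prop :=
  IsProbabilityMeasure P ∧
    ∀ (s : Finset ℕ) (B : ℕ → Set ℝ), (∀ i ∈ s, MeasurableSet (B i)) →
      P {z : ℕ → ℝ | ∀ i ∈ s, z i ∈ B i} = ∏ i ∈ s, ν (B i)

/-- The cylinder condition determines the measure, so `P` is Mathlib's product measure. -/
lemma IsCountableProductOf.eq_infinitePi {P : Measure (ℕ → ℝ)} {ν : Measure ℝ}
    [IsProbabilityMeasure ν] (h : IsCountableProductOf P ν) :
    P = Measure.infinitePi (fun _ => ν) := by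
  refine Measure.eq_infinitePi _ fun s B hB => ?_
  exact h.2 s B fun i _ => hB i

lemma ae_tendsto_sampleMean_infinitePi (ν : Measure ℝ) [IsProbabilityMeasure ν]
    (hν : Integrable id ν) :
    ∀ᵐ z : ℕ → ℝ ∂(Measure.infinitePi (fun _ : ℕ => ν)),
      Tendsto (fun n : ℕ => (∑ k ∈ Finset.range n, z k) / (n : ℝ)) atTop (nhds (∫ x : ℝ, x ∂ν)) := by
  have hmp (i : ℕ) := measurePreserving_eval_infinitePi (fun _ : ℕ => ν) i
  have hindep := iIndepFun_infinitePi (P := fun _ : ℕ => ν) (X := fun _ x => x)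
    fun _ => measurable_id
  have hmean : ∫ z, z 0 ∂(Measure.infinitePi (fun _ : ℕ => ν)) = ∫ x, x ∂ν := by
    conv_rhs => rw [← (hmp 0).map_eq]
    exact (integral_map (hmp 0).aemeasurable aestronglyMeasurable_id).symm
  rw [← hmean]
  refine strong_law_ae_real (fun i (z : ℕ → ℝ) => z i) ?_ (fun i j hij => hindep.indepFun hij) ?_
  · exact (hmp 0).integrable_comp_of_integrable hν
  · exact fun i => ⟨(hmp i).aemeasurable, (hmp 0).aemeasurable,
      (hmp i).map_eq.trans (hmp 0).map_eq.symm⟩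

theorem ou_theta_estimator_consistent_ae
    (t x₀ μ σ : ℝ) (ht : 0 < t) (hσ : 0 < σ) (hx₀μ : x₀ ≠ μ)
    (P : ℝ → Measure (ℕ → ℝ))
    (hP : ∀ θ : ℝ, 0 < θ → IsCountableProductOf (P θ)
      (gaussianReal (x₀ * Real.exp (-θ * t) + μ * (1 - Real.exp (-θ * t)))
        ((σ ^ 2 / (2 * θ) * (1 - Real.exp (-2 * θ * t))).toNNReal))) :
    ∀ θ : ℝ, 0 < θ →
      P θ {z : ℕ → ℝ |
        Tendsto (fun n : ℕ =>
            -(1 / t) * Real.log (((∑ k ∈ Finset.range n, z k) / n - μ) / (x₀ - μ)))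
          atTop (nhds θ)} = 1 := by
  intro θ hθ
  have hprob := (hP θ hθ).1
  have hlln := ae_tendsto_sampleMean_infinitePi _
    ((memLp_id_gaussianReal (μ := x₀ * Real.exp (-θ * t) + μ * (1 - Real.exp (-θ * t)))
      (v := (σ ^ 2 / (2 * θ) * (1 - Real.exp (-2 * θ * t))).toNNReal) 1).integrable le_rfl)
  rw [← (hP θ hθ).eq_infinitePi, integral_id_gaussianReal] at hlln
  rw [← measure_univ (μ := P θ)]
  refine measure_congr (eventuallyEq_univ.2 ?_)
  filter_upwards [hlln] with z hz
  have hne : x₀ - μ ≠ 0 := sub_ne_zero.2 hx₀μ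
  have hratio : (x₀ * Real.exp (-θ * t) + μ * (1 - Real.exp (-θ * t)) - μ) / (x₀ - μ)
      = Real.exp (-θ * t) := by
    field_simp
    ring
  have hlim := (hz.sub_const μ).div_const (x₀ - μ)
  rw [hratio] at hlim
  have hlog := (hlim.log (Real.exp_ne_zero _)).const_mul (-(1 / t))
  rw [Real.log_exp] at hlog
  have hθt : -(1 / t) * (-θ * t) = θ := by
    field_simp
  rw [hθt] at hlog
  exact hlog
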